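/- Let (B, A, i, e, l) be a cleft extension of abelian categories in which A and B have arbitrary coproducts and both i and e preserve coproducts, and let P₁ →σ P₀ → B → 0 be a projective presentation of B in B. Then l(B) is a silting object of A with respect to l(σ) if and only if B is a silting object of B with respect to σ and F(B) ∈ Gen(B), where F(B) := e(ker(μ_{i(B)})) and μ is the counit of (l, e). -/

import Mathlib

open CategoryTheory Limits

universe v u₁ u₂

/-- For a morphism `σ : X ⟶ Y` in a category `C`, `DClass σ` is the class of objects `L`
such that `Hom_C(σ, L) : Hom_C(Y, L) → Hom_C(X, L)` is surjective. -/
def DClass {C : Type u₁} [Category.{v} C] {X Y : C} (σ : X ⟶ Y) (L : C) : Prop :=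
  Function.Surjective (fun g : Y ⟶ L => σ ≫ g)

/-- `Gen X` is the class of epimorphic images of coproducts of copies of `X`. -/
def Gen {C : Type u₁} [Category.{v} C] [HasCoproducts.{v} C] (X L : C) : Prop :=
  ∃ (I : Type v) (p : (∐ fun _ : I => X) ⟶ L), Epi p

/-- Given a morphism `σ` occurring in a projective presentation `P₁ ⟶ P₀ ⟶ X ⟶ 0`, the object
`X` is silting with respect to `σ` if `Gen X = D_σ`. -/
def IsSilting {C : Type u₁} [Category.{v} C] [HasCoproducts.{v} C]
    {P₁ P₀ : C} (σ : P₁ ⟶ P₀) (X : C) : Prop :=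
  ∀ L : C, Gen X L ↔ DClass σ L

theorem gen_iff {C : Type u₁} [Category.{v} C] [HasCoproducts.{v} C] (X L : C) :
    Gen X L ↔ ∀ (Z : C) (h h' : L ⟶ Z), (∀ g : X ⟶ L, g ≫ h = g ≫ h') → h = h' := by
  constructor
  · rintro ⟨I, p, hp⟩ Z h h' H
    rw [← cancel_epi p]
    apply Sigma.hom_ext
    intro b
    have := H (Sigma.ι (fun _ : I => X) b ≫ p)
    simpa using this
  · intro H
    refine ⟨X ⟶ L, Sigma.desc (fun g => g), ⟨fun {Z} h h' hh => H Z h h' fun g => ?_⟩⟩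
    have := Sigma.ι (fun _ : (X ⟶ L) => X) g ≫= hh
    simpa using this

theorem dclass_adj {A : Type u₁} {B : Type u₂} [Category.{v} A] [Category.{v} B]
    {e : A ⥤ B} {l : B ⥤ A} (adj : l ⊣ e) {P₁ P₀ : B} (σ : P₁ ⟶ P₀) (L : A) :
    DClass (l.map σ) L ↔ DClass σ (e.obj L) := by
  constructor
  · intro H f
    obtain ⟨g, hg⟩ := H ((adj.homEquiv _ _).symm f)
    refine ⟨adj.homEquiv _ _ g, ?_⟩
    dsimp only at hg ⊢
    rw [← adj.homEquiv_naturality_left, hg, Equiv.apply_symm_apply]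
  · intro H f
    obtain ⟨g, hg⟩ := H (adj.homEquiv _ _ f)
    refine ⟨(adj.homEquiv _ _).symm g, ?_⟩
    dsimp only at hg ⊢
    rw [← adj.homEquiv_naturality_left_symm, hg, Equiv.symm_apply_apply]

theorem lift_map_kernel {A : Type u₁} {B : Type u₂} [Category.{v} A] [Category.{v} B]
    [Abelian A] [Abelian B] (e : A ⥤ B) [PreservesFiniteLimits e] [PreservesFiniteColimits e]
    [e.PreservesZeroMorphisms] {M N : A} (m : M ⟶ N) {T : B} (t : T ⟶ e.obj M)
    (ht : t ≫ e.map m = 0) : ∃ s : T ⟶ e.obj (kernel m), s ≫ e.map (kernel.ι m) = t := by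
  have hexe := (ShortComplex.exact_kernel m).map e
  have : Mono ((ShortComplex.mk (kernel.ι m) m (kernel.condition m)).map e).f :=
    inferInstanceAs (Mono (e.map (kernel.ι m)))
  exact ⟨hexe.lift t ht, hexe.lift_f t ht⟩

theorem desc_map_kernel {A : Type u₁} {B : Type u₂} [Category.{v} A] [Category.{v} B]
    [Abelian A] [Abelian B] (e : A ⥤ B) [PreservesFiniteLimits e] [PreservesFiniteColimits e]
    [e.PreservesZeroMorphisms] {M N : A} (m : M ⟶ N) [Epi (e.map m)] {T : B} (t : e.obj M ⟶ T)
    (ht : e.map (kernel.ι m) ≫ t = 0) : ∃ s : e.obj N ⟶ T, e.map m ≫ s = t := by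
  have hexe := (ShortComplex.exact_kernel m).map e
  have : Epi ((ShortComplex.mk (kernel.ι m) m (kernel.condition m)).map e).g :=
    inferInstanceAs (Epi (e.map m))
  exact ⟨hexe.desc t ht, hexe.g_desc t ht⟩

theorem dclass_iso {C : Type u₁} [Category.{v} C] {X Y : C} (σ : X ⟶ Y) {L L' : C}
    (α : L ≅ L') (H : DClass σ L) : DClass σ L' := by
  intro f
  obtain ⟨g, hg⟩ := H (f ≫ α.inv)
  refine ⟨g ≫ α.hom, ?_⟩
  dsimp only at hg ⊢
  rw [← Category.assoc, hg]; simp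

/-- Let `(B, A, i, e, l)` be a cleft extension of abelian categories with
arbitrary coproducts in which `i` and `e` preserve coproducts, and let
`P₁ ⟶σ P₀ ⟶π Bo ⟶ 0` be a projective presentation of `Bo` in `B`. Then `l(Bo)` is silting in
`A` with respect to `l(σ)` if and only if `Bo` is silting in `B` with respect to `σ` and
`F(Bo) ∈ Gen(Bo)`, where `F(Bo) := e(ker(μ_{i(Bo)}))` and `μ` is the counit of `(l, e)`. -/
theorem stmt8 {A : Type u₁} {B : Type u₂} [Category.{v} A] [Category.{v} B]
    [Abelian A] [Abelian B] [EnoughProjectives A] [EnoughProjectives B]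
    [HasCoproducts.{v} A] [HasCoproducts.{v} B]
    (i : B ⥤ A) (e : A ⥤ B) (l : B ⥤ A) [e.Faithful]
    [PreservesFiniteLimits e] [PreservesFiniteColimits e]
    [∀ J : Type v, PreservesColimitsOfShape (Discrete J) i]
    [∀ J : Type v, PreservesColimitsOfShape (Discrete J) e]
    (adj : l ⊣ e) (η : i ⋙ e ≅ 𝟭 B)
    {P₁ P₀ Bo : B} (σ : P₁ ⟶ P₀) (π : P₀ ⟶ Bo)
    (hP₁ : Projective P₁) (hP₀ : Projective P₀) [Epi π]
    (w : σ ≫ π = 0) (hexact : (ShortComplex.mk σ π w).Exact) :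
    IsSilting (l.map σ) (l.obj Bo) ↔
      IsSilting σ Bo ∧ Gen Bo (e.obj (kernel (adj.counit.app (i.obj Bo)))) := by
  have hz : e.PreservesZeroMorphisms := inferInstance
  have hadd : e.Additive := Functor.additive_of_preserves_binary_products e
  set μ : l.obj (e.obj (i.obj Bo)) ⟶ i.obj Bo := adj.counit.app (i.obj Bo) with hμ
  let u : e.obj (i.obj Bo) ⟶ e.obj (l.obj (e.obj (i.obj Bo))) :=
    adj.unit.app (e.obj (i.obj Bo))
  have huμ : u ≫ e.map μ = 𝟙 _ := adj.right_triangle_components (i.obj Bo)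
  have hse : IsSplitEpi (e.map μ) := ⟨⟨⟨u, huμ⟩⟩⟩
  have hμe : Epi μ := e.epi_of_epi_map inferInstance
  have hmono : Mono (e.map (kernel.ι μ)) := inferInstance
  let β : e.obj (i.obj Bo) ≅ Bo := η.app Bo
  constructor
  · intro H
    have hgd : ∀ X : B, Gen Bo X → DClass σ X := by
      rintro X ⟨I, p, hp⟩ f
      let q : (∐ fun _ : I => l.obj Bo) ⟶ i.obj X := Sigma.desc fun j =>
        (adj.homEquiv _ _).symm (Sigma.ι (fun _ : I => Bo) j ≫ p ≫ η.inv.app X)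
      let s : (∐ fun _ : I => Bo) ⟶ e.obj (∐ fun _ : I => l.obj Bo) := Sigma.desc fun j =>
        adj.homEquiv _ _ (Sigma.ι (fun _ : I => l.obj Bo) j)
      have hs : s ≫ e.map q ≫ η.hom.app X = p := by
        apply Sigma.hom_ext
        intro j
        have : adj.homEquiv _ _ (Sigma.ι (fun _ : I => l.obj Bo) j) ≫ e.map q
            = Sigma.ι (fun _ : I => Bo) j ≫ p ≫ η.inv.app X := by
          rw [← adj.homEquiv_naturality_right]
          simp [q]
        simp only [s, Sigma.ι_desc_assoc]
        rw [reassoc_of% this]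
        have h2 : η.inv.app X ≫ η.hom.app X = 𝟙 _ := η.inv_hom_id_app X
        rw [h2]; exact congrArg _ (Category.comp_id p)
      have hD : DClass σ (e.obj (∐ fun _ : I => l.obj Bo)) :=
        (dclass_adj adj σ _).1 ((H _).1 ⟨I, 𝟙 _, inferInstance⟩)
      obtain ⟨t, ht⟩ := hD (Projective.factorThru f p ≫ s)
      refine ⟨t ≫ e.map q ≫ η.hom.app X, ?_⟩
      dsimp only at ht ⊢
      rw [reassoc_of% ht]
      erw [hs]
      simp
    have hdg : ∀ X : B, DClass σ X → Gen Bo X := by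
      intro X hX
      have h1 : Gen (l.obj Bo) (i.obj X) :=
        (H _).2 ((dclass_adj adj σ _).2 (dclass_iso σ (η.app X).symm hX))
      rw [gen_iff] at h1 ⊢
      intro Z h h' hh
      have key : i.map h = i.map h' := by
        apply h1
        intro g
        apply (adj.homEquiv _ _).injective
        rw [adj.homEquiv_naturality_right, adj.homEquiv_naturality_right]
        rw [← cancel_mono (η.hom.app Z)]
        have e1 : e.map (i.map h) ≫ η.hom.app Z = η.hom.app X ≫ h := η.hom.naturality h
        have e2 : e.map (i.map h') ≫ η.hom.app Z = η.hom.app X ≫ h' := η.hom.naturality h'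
        rw [Category.assoc, Category.assoc, e1, e2]
        have := hh (adj.homEquiv _ _ g ≫ η.hom.app X)
        simpa using this
      have e1 : e.map (i.map h) ≫ η.hom.app Z = η.hom.app X ≫ h := η.hom.naturality h
      have e2 : e.map (i.map h') ≫ η.hom.app Z = η.hom.app X ≫ h' := η.hom.naturality h'
      rw [key, e2] at e1
      exact ((cancel_epi (η.hom.app X)).1 e1).symm
    refine ⟨fun X => ⟨hgd X, hdg X⟩, hdg _ ?_⟩
    have h1 : DClass σ (e.obj (l.obj Bo)) :=
      (dclass_adj adj σ _).1 ((H _).1 ((gen_iff _ _).2 fun Z h h' hh => by simpa using hh (𝟙 _)))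
    have h2 : DClass σ (e.obj (l.obj (e.obj (i.obj Bo)))) :=
      dclass_iso σ (e.mapIso (l.mapIso β.symm)) h1
    intro f
    obtain ⟨t, ht⟩ := h2 (f ≫ e.map (kernel.ι μ))
    dsimp only at ht
    have hk : (t ≫ (𝟙 _ - e.map μ ≫ u)) ≫ e.map μ = 0 := by
      simp [Preadditive.sub_comp, Preadditive.comp_sub, huμ]
    obtain ⟨v, hv⟩ := lift_map_kernel e μ _ hk
    refine ⟨v, ?_⟩
    dsimp only
    rw [← cancel_mono (e.map (kernel.ι μ)), Category.assoc, hv, reassoc_of% ht]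
    have h0 : e.map (kernel.ι μ) ≫ e.map μ = 0 := by
      rw [← e.map_comp, kernel.condition, e.map_zero]
    simp [Preadditive.comp_sub, reassoc_of% h0]
  · rintro ⟨H, hF⟩
    have hel : Gen Bo (e.obj (l.obj Bo)) := by
      rw [gen_iff] at hF ⊢
      intro Z h h' hh
      let γ : e.obj (l.obj (e.obj (i.obj Bo))) ≅ e.obj (l.obj Bo) := e.mapIso (l.mapIso β)
      rw [← cancel_epi γ.hom, ← sub_eq_zero]
      have hall : ∀ g : Bo ⟶ e.obj (l.obj (e.obj (i.obj Bo))),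
          g ≫ (γ.hom ≫ h - γ.hom ≫ h') = 0 := by
        intro g
        have := hh (g ≫ γ.hom)
        simp only [Category.assoc] at this
        rw [Preadditive.comp_sub, this, sub_self]
      have hd1 : e.map (kernel.ι μ) ≫ (γ.hom ≫ h - γ.hom ≫ h') = 0 := by
        apply hF
        intro g
        rw [← Category.assoc, hall, comp_zero]
      have hd2 : u ≫ (γ.hom ≫ h - γ.hom ≫ h') = 0 := by
        have := hall (β.inv ≫ u)
        rw [Category.assoc] at this
        exact (cancel_epi β.inv).1 (this.trans comp_zero.symm)
      obtain ⟨t, ht⟩ := desc_map_kernel e μ _ hd1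
      rw [← ht, reassoc_of% huμ] at hd2
      rw [← ht, hd2, comp_zero]
    intro L
    rw [dclass_adj adj]
    constructor
    · rintro ⟨I, p, hp⟩
      rw [← H]
      rw [gen_iff] at hel ⊢
      intro Z h h' hh
      have hpe : Epi (e.map p) := inferInstance
      rw [← cancel_epi (e.map p)]
      refine (isColimitOfPreserves e (coproductIsCoproduct (fun _ : I => l.obj Bo))).hom_ext ?_
      rintro ⟨j⟩
      apply hel
      intro g
      have := hh (g ≫ e.map (Sigma.ι (fun _ : I => l.obj Bo) j) ≫ e.map p)
      simpa using this
    · intro hL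
      rw [← H, gen_iff] at hL
      rw [gen_iff]
      intro Z h h' hh
      apply e.map_injective
      apply hL
      intro g
      have := congrArg (adj.homEquiv _ _) (hh ((adj.homEquiv _ _).symm g))
      rw [adj.homEquiv_naturality_right, adj.homEquiv_naturality_right] at this
      simpa using this
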